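/- arXiv:1605.08416 — 2 statements merged into one kernel-verified Lean document; each statement's English description precedes it below -/
import Mathlib

section
/- Fix a ∈ {0,1}^n of Hamming weight n/3 and c, c' ∈ {0,1}^n of Hamming weight 2n/3 with c ≠ c'. For w uniformly random in (Z/MZ)^{n+1}, the three values h_0(a,w), h_2(c,w), h_2(c',w) are independent and each uniformly distributed in Z/MZ, provided a ≤ c and a ≤ c' coordinatewise (i.e., c−a and c'−a are 0/1 vectors) — in particular the probability that all three equal a fixed β ∈ Z/MZ is M^{-3}. -/
open Finset

/-- For fixed `a` of Hamming weight `n/3` and distinct `c, c'` of Hamming weight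
`2n/3` with `a ≤ c`, `a ≤ c'` coordinatewise, the triple
`(h₀(a,w), h₂(c,w), h₂(c',w))` is uniformly distributed in `(ℤ/Mℤ)³` as `w`
ranges uniformly over `(ℤ/Mℤ)^{n+1}`: each value `(β₀, β₁, β₂)` is attained by
exactly `M^{n-2}` choices of `w` (so in particular the probability that all
three equal a fixed `β` is `M⁻³`). -/
theorem stmt15 (M n : ℕ) [NeZero M] (hM : Odd M) (hn : 3 ∣ n)
    (a c c' : Fin n → ℕ)
    (ha : ∀ s, a s ≤ 1) (hc : ∀ s, c s ≤ 1) (hc' : ∀ s, c' s ≤ 1)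
    (hwa : (univ.filter fun s => a s = 1).card = n / 3)
    (hwc : (univ.filter fun s => c s = 1).card = 2 * n / 3)
    (hwc' : (univ.filter fun s => c' s = 1).card = 2 * n / 3)
    (hne : c ≠ c')
    (hac : ∀ s, a s ≤ c s) (hac' : ∀ s, a s ≤ c' s)
    (β₀ β₁ β₂ : ZMod M) :
    (univ.filter fun w : Fin (n + 1) → ZMod M =>
        (∑ s : Fin n, (a s : ZMod M) * w s.succ) = β₀ ∧
        (w 0 + ∑ s : Fin n, (c s : ZMod M) * w s.succ) = β₁ ∧
        (w 0 + ∑ s : Fin n, (c' s : ZMod M) * w s.succ) = β₂).card =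
      M ^ (n - 2) := by
  have hi : ∃ i, c i = 1 ∧ c' i = 0 := by
    by_contra hcon
    push Not at hcon
    apply hne
    have hsub : (univ.filter fun s => c s = 1) ⊆ (univ.filter fun s => c' s = 1) := by
      intro s hs
      simp only [mem_filter, mem_univ, true_and] at hs ⊢
      have h1 := hcon s hs
      have h2 := hc' s
      omega
    have heq := Finset.eq_of_subset_of_card_le hsub (by rw [hwc, hwc'])
    funext s
    have h3 : c s = 1 ↔ c' s = 1 := by
      have := Finset.ext_iff.mp heq s
      simpa using this
    have h1 := hc s
    have h2 := hc' s
    omega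
  obtain ⟨i, hi1, hi0⟩ := hi
  have hai : a i = 0 := by
    have := hac' i
    omega
  have hn3 : 3 ≤ n := Nat.le_of_dvd (by have := i.2; omega) hn
  obtain ⟨k, hk⟩ : ∃ k, a k = 1 := by
    have h0 : 0 < (univ.filter fun s => a s = 1).card := by rw [hwa]; omega
    obtain ⟨k, hk⟩ := Finset.card_pos.mp h0
    exact ⟨k, by simpa using hk⟩
  have hck : c k = 1 := by
    have h1 := hc k
    have h2 := hac k
    omega
  have hck' : c' k = 1 := by
    have h1 := hc' k
    have h2 := hac' k
    omega
  let f : (Fin (n + 1) → ZMod M) →+ ZMod M × ZMod M × ZMod M :=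
    { toFun := fun w => (∑ s : Fin n, (a s : ZMod M) * w s.succ,
        w 0 + ∑ s : Fin n, (c s : ZMod M) * w s.succ,
        w 0 + ∑ s : Fin n, (c' s : ZMod M) * w s.succ)
      map_zero' := by simp
      map_add' := by
        intro x y
        simp only [Pi.add_apply, mul_add, Finset.sum_add_distrib, Prod.mk_add_mk, Prod.mk.injEq]
        refine ⟨trivial, ?_, ?_⟩ <;> ring }
  have hf : ∀ w, f w = (∑ s : Fin n, (a s : ZMod M) * w s.succ,
        w 0 + ∑ s : Fin n, (c s : ZMod M) * w s.succ,
        w 0 + ∑ s : Fin n, (c' s : ZMod M) * w s.succ) := fun _ => rfl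
  have hsurj : Function.Surjective f := by
    rintro ⟨x, y, z⟩
    refine ⟨Fin.cons (z - x) (Pi.single k x + Pi.single i (y - z)), ?_⟩
    rw [hf]
    simp [mul_add, Finset.sum_add_distrib, Pi.single_apply, hk, hck, hck', hai, hi1, hi0]
    ring
  have hfib : ∀ p q, (univ.filter fun w => f w = p).card = (univ.filter fun w => f w = q).card :=
    fun p q => AddMonoidHom.card_fiber_eq_of_mem_range f (hsurj p) (hsurj q)
  have htot : (univ : Finset (Fin (n + 1) → ZMod M)).card =
      ∑ p : ZMod M × ZMod M × ZMod M, (univ.filter fun w => f w = p).card :=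
    Finset.card_eq_sum_card_fiberwise (fun _ _ => by simp)
  rw [Finset.sum_congr rfl (fun p _ => hfib p (β₀, β₁, β₂))] at htot
  simp only [Finset.card_univ, Finset.sum_const, smul_eq_mul, Fintype.card_prod, ZMod.card,
    Fintype.card_pi, Finset.prod_const, Fintype.card_fin, hf, Prod.mk.injEq] at htot
  have hMpos : 0 < M := Nat.pos_of_ne_zero (NeZero.ne M)
  have hpow : M ^ (n + 1) = M * (M * M) * M ^ (n - 2) := by
    obtain ⟨m, rfl⟩ : ∃ m, n = m + 2 := ⟨n - 2, by omega⟩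
    rw [Nat.add_sub_cancel]
    ring
  rw [hpow] at htot
  exact (Nat.eq_of_mul_eq_mul_left (by positivity) htot).symm
end

section
/- For all sufficiently large n divisible by 3, there exists a tri-colored sum-free set in F_2^n of size greater than C(n, n/3) · 2^{-√(16n/3)}. -/
theorem one_dim_sum (R : ℕ) (a : ℝ) (ha : 1 ≤ a) :
    ∑ t ∈ Finset.Icc (-(R:ℤ)) R, (1 + ((t:ℝ))^2/a^2)⁻¹ ≤ 5 * a := by
  have key : ∀ R : ℕ, ∑ t ∈ Finset.Icc (-(R:ℤ)) R, (1 + ((t:ℝ))^2/a^2)⁻¹ ≤ 1 + 4 * a^2 * (1/a - 1/(a+R)) := by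
    intro R
    induction R with
    | zero => simp
    | succ R ih =>
      have h1 : Finset.Icc (-((R+1:ℕ):ℤ)) ((R+1:ℕ):ℤ) =
          insert (-((R+1:ℕ):ℤ)) (insert ((R+1:ℕ):ℤ) (Finset.Icc (-(R:ℤ)) R)) := by
        ext t
        simp only [Finset.mem_Icc, Finset.mem_insert]
        omega
      rw [h1, Finset.sum_insert, Finset.sum_insert]
      · have hR : (0:ℝ) ≤ R := Nat.cast_nonneg R
        have h2 : (1 + ((R:ℝ)+1)^2/a^2)⁻¹ ≤ 2 * a^2 * (1/(a+R) - 1/(a+R+1)) := by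
          have e1 : (1 + ((R:ℝ)+1)^2/a^2)⁻¹ = a^2 / (a^2 + (R+1)^2) := by
            field_simp
          have e2 : 1/(a+R) - 1/(a+R+1) = 1/((a+R)*(a+R+1)) := by
            field_simp; ring
          rw [e1, e2, mul_one_div, div_le_div_iff₀ (by positivity) (by positivity)]
          have : (a+R)*(a+R+1) ≤ 2*(a^2 + (R+1)^2) := by nlinarith [sq_nonneg (a - (R+1))]
          nlinarith [sq_nonneg a]
        push_cast at *
        have e3 : (-((R:ℝ)+1))^2 = ((R:ℝ)+1)^2 := by ring
        rw [← add_assoc a]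
        simp only [e3]
        nlinarith
      · simp
      · simp only [Finset.mem_insert, Finset.mem_Icc]; omega
  have := key R
  have hR : (0:ℝ) ≤ R := Nat.cast_nonneg R
  have h3 : 4 * a^2 * (1/a - 1/(a+R)) ≤ 4 * a := by
    have : 0 ≤ 1/(a+R) := by positivity
    have h4 : 4 * a^2 * (1/a) = 4 * a := by field_simp
    nlinarith [sq_nonneg a, mul_nonneg (sq_nonneg a) this]
  linarith

theorem ball_count (D R : ℕ) (a : ℝ) (ha : 1 ≤ a) :
    ((((Fintype.piFinset fun _ : Fin D => Finset.Icc (-(R:ℤ)) R).filter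
      (fun t => ∑ i, ((t i:ℤ):ℝ)^2 ≤ D*a^2)).card : ℕ) : ℝ) ≤ (15*a)^D := by
  have h0 : ∀ t : Fin D → ℤ, ∑ i, ((t i:ℤ):ℝ)^2 ≤ D*a^2 →
      (1:ℝ) ≤ 3^D * ∏ i, (1 + ((t i:ℤ):ℝ)^2/a^2)⁻¹ := by
    intro t ht
    rw [Finset.prod_inv_distrib, ← div_eq_mul_inv, one_le_div (Finset.prod_pos (fun i _ => by positivity))]
    calc ∏ i, (1 + ((t i:ℤ):ℝ)^2/a^2) ≤ ∏ i, Real.exp (((t i:ℤ):ℝ)^2/a^2) := by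
          apply Finset.prod_le_prod
          · intro i _; positivity
          · intro i _; have := Real.add_one_le_exp (((t i:ℤ):ℝ)^2/a^2); linarith
      _ = Real.exp ((∑ i, ((t i:ℤ):ℝ)^2)/a^2) := by
          rw [← Real.exp_sum, Finset.sum_div]
      _ ≤ Real.exp (D * 1) := by
          apply Real.exp_le_exp.2
          rw [div_le_iff₀ (by positivity)]; linarith
      _ = Real.exp 1 ^ D := by rw [← Real.exp_nat_mul]
      _ ≤ 3^D := by
          gcongr; exact Real.exp_one_lt_three.le
  calc _ = ∑ t ∈ (Fintype.piFinset fun _ : Fin D => Finset.Icc (-(R:ℤ)) R).filter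
          (fun t => ∑ i, ((t i:ℤ):ℝ)^2 ≤ D*a^2), (1:ℝ) := by simp
    _ ≤ ∑ t ∈ (Fintype.piFinset fun _ : Fin D => Finset.Icc (-(R:ℤ)) R).filter
          (fun t => ∑ i, ((t i:ℤ):ℝ)^2 ≤ D*a^2), (3^D * ∏ i, (1 + ((t i:ℤ):ℝ)^2/a^2)⁻¹) := by
        apply Finset.sum_le_sum
        intro t ht
        exact h0 t (Finset.mem_filter.1 ht).2
    _ ≤ ∑ t ∈ (Fintype.piFinset fun _ : Fin D => Finset.Icc (-(R:ℤ)) R),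
         (3^D * ∏ i, (1 + ((t i:ℤ):ℝ)^2/a^2)⁻¹) := by
        apply Finset.sum_le_sum_of_subset_of_nonneg (Finset.filter_subset _ _)
        intro t _ _
        have : 0 ≤ ∏ i, (1 + ((t i:ℤ):ℝ)^2/a^2)⁻¹ := Finset.prod_nonneg (fun i _ => by positivity)
        positivity
    _ = 3^D * ∏ i : Fin D, ∑ t ∈ Finset.Icc (-(R:ℤ)) R, (1 + ((t:ℝ))^2/a^2)⁻¹ := by
        rw [← Finset.mul_sum, Finset.prod_univ_sum]
    _ ≤ 3^D * (5*a)^D := by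
        rw [Finset.prod_const, Finset.card_univ, Fintype.card_fin]
        gcongr
        exact one_dim_sum R a ha
    _ = (15*a)^D := by rw [← mul_pow]; ring

theorem second_moment (Q : ℕ) (f : Fin Q → ℝ) (B : ℝ) (hf : ∑ q, f q = 0) (hB : ∀ q, (f q)^2 ≤ B) (D : ℕ) :
    ∑ x : Fin D → Fin Q, (∑ i, f (x i))^2 ≤ D * B * Q^D := by
  induction D with
  | zero => simp
  | succ D ih =>
    rw [← (Fin.consEquiv (fun _ : Fin (D+1) => Fin Q)).sum_comp, Fintype.sum_prod_type]
    simp only [Fin.consEquiv, Equiv.coe_fn_mk, Fin.sum_univ_succ, Fin.cons_zero, Fin.cons_succ]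
    have e : ∀ q : Fin Q, ∑ x : Fin D → Fin Q, (f q + ∑ i, f (x i))^2 =
       Q^D * (f q)^2 + 2 * f q * (∑ x : Fin D → Fin Q, ∑ i, f (x i)) +
         ∑ x : Fin D → Fin Q, (∑ i, f (x i))^2 := by
      intro q
      simp only [add_sq, Finset.sum_add_distrib, ← Finset.mul_sum]
      simp
    simp only [e, Finset.sum_add_distrib, ← Finset.mul_sum, ← Finset.sum_mul, hf]
    have h1 : ∑ q, (f q)^2 ≤ Q * B := by
      calc _ ≤ ∑ q : Fin Q, B := Finset.sum_le_sum (fun q _ => hB q)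
        _ = Q * B := by simp
    simp only [Finset.sum_const, Finset.card_univ, Fintype.card_fin, nsmul_eq_mul]
    have h2 : (Q:ℝ)^D * ∑ q, (f q)^2 ≤ Q^D * (Q*B) := by gcongr
    have h3 : (Q:ℝ) * ∑ x : Fin D → Fin Q, (∑ i, f (x i))^2 ≤ Q * (D * B * Q^D) := by gcongr
    push_cast
    have : ((D:ℝ)+1) * B * Q^(D+1) = Q^D * (Q*B) + Q * (D * B * Q^D) := by ring
    rw [this]
    linarith

theorem cheb (D Q : ℕ) (hD : 1 ≤ D) (hQ : 1 ≤ Q) (δ : ℝ) (hδ : 0 < δ) (hδ2 : δ ≤ 2 * Q^2 * √D) :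
    ∃ U : Finset (Fin D → Fin Q),
      (∀ u ∈ U, ∀ v ∈ U, |∑ i, ((u i : ℕ):ℝ)^2 - ∑ i, ((v i : ℕ):ℝ)^2| < δ) ∧
      (3/32) * (Q:ℝ)^D * δ / (Q^2 * √D) ≤ U.card := by
  classical
  have hQ' : (1:ℝ) ≤ Q := by exact_mod_cast hQ
  have hD' : (1:ℝ) ≤ √D := by rw [Real.one_le_sqrt]; exact_mod_cast hD
  have hDs : √(D:ℝ)^2 = D := Real.sq_sqrt (Nat.cast_nonneg D)
  set m : ℝ := (∑ q : Fin Q, ((q:ℕ):ℝ)^2) / Q with hm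
  have hm0 : 0 ≤ m := by positivity
  have hq : ∀ q : Fin Q, ((q:ℕ):ℝ)^2 ≤ Q^2 := by
    intro q
    have : ((q:ℕ):ℝ) ≤ Q := by exact_mod_cast q.2.le
    gcongr
  have hm1 : m ≤ Q^2 := by
    rw [hm, div_le_iff₀ (by positivity)]
    calc _ ≤ ∑ q : Fin Q, (Q:ℝ)^2 := Finset.sum_le_sum (fun q _ => hq q)
      _ = _ := by simp; ring
  set S : (Fin D → Fin Q) → ℝ := fun u => ∑ i, ((u i : ℕ):ℝ)^2 with hS
  have hvar := second_moment Q (fun q => ((q:ℕ):ℝ)^2 - m) (Q^4)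
    (by rw [Finset.sum_sub_distrib, hm]; simp; field_simp; simp)
    (by
      intro q
      have h1 := hq q
      have h2 : (0:ℝ) ≤ ((q:ℕ):ℝ)^2 := by positivity
      rw [show (Q:ℝ)^4 = (Q^2)^2 by ring]
      apply sq_le_sq'  <;> linarith) D
  have hS2 : ∀ x : Fin D → Fin Q, ∑ i, (((x i : ℕ):ℝ)^2 - m) = S x - D * m := by
    intro x; rw [Finset.sum_sub_distrib]; simp [hS]
  simp only [hS2] at hvar
  set w : ℝ := 2 * Q^2 * √D with hw
  have hwpos : 0 < w := by positivity
  set G := Finset.univ.filter (fun x => |S x - D*m| ≤ w) with hG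
  have hbad : ((Gᶜ.card : ℕ):ℝ) * w^2 ≤ D * Q^4 * Q^D := by
    calc _ = ∑ x ∈ Gᶜ, w^2 := by simp
      _ ≤ ∑ x ∈ Gᶜ, (S x - D*m)^2 := by
        apply Finset.sum_le_sum
        intro x hx
        simp only [hG, Finset.mem_compl, Finset.mem_filter, Finset.mem_univ, true_and, not_le] at hx
        rw [← sq_abs (S x - D*m)]
        gcongr
      _ ≤ ∑ x, (S x - D*m)^2 := Finset.sum_le_sum_of_subset_of_nonneg (Finset.subset_univ _)
          (fun _ _ _ => sq_nonneg _)
      _ ≤ _ := hvar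
  have hbad2 : ((Gᶜ.card : ℕ):ℝ) ≤ Q^D / 4 := by
    have e : w^2 = 4 * (D * Q^4) := by rw [hw, mul_pow, mul_pow, hDs]; ring
    rw [e] at hbad
    have hp : (0:ℝ) < D * Q^4 := by
      have : (0:ℝ) < D := by exact_mod_cast hD
      positivity
    have : ((Gᶜ.card : ℕ):ℝ) * 4 * (D * Q^4) ≤ Q^D * (D*Q^4) := by linarith
    have := le_of_mul_le_mul_right this hp
    linarith
  have hGc : (3/4) * (Q:ℝ)^D ≤ G.card := by
    have h := Finset.card_add_card_compl G
    have h' : (G.card:ℝ) + Gᶜ.card = Q^D := by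
      have : Fintype.card (Fin D → Fin Q) = Q^D := by simp
      rw [this] at h
      exact_mod_cast h
    linarith
  -- pigeonhole
  set lo : ℤ := ⌊(D*m - w)/δ⌋ with hlo
  set hi : ℤ := ⌊(D*m + w)/δ⌋ with hhi
  have hmaps : ∀ x ∈ G, ⌊S x/δ⌋ ∈ Finset.Icc lo hi := by
    intro x hx
    simp only [hG, Finset.mem_filter, Finset.mem_univ, true_and, abs_le] at hx
    rw [Finset.mem_Icc]
    constructor <;> apply Int.floor_le_floor <;> gcongr <;> linarith
  have hcardI : ((Finset.Icc lo hi).card : ℝ) ≤ 4 * (w / δ) := by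
    have hle : lo ≤ hi := by
      apply Int.floor_le_floor; gcongr; linarith
    have : ((Finset.Icc lo hi).card : ℝ) = hi + 1 - lo := by
      rw [Int.card_Icc]
      have : (((hi + 1 - lo).toNat : ℕ):ℤ) = hi + 1 - lo := Int.toNat_of_nonneg (by omega)
      exact_mod_cast this
    rw [this]
    have h1 := Int.floor_le ((D*m + w)/δ)
    have h2 := Int.lt_floor_add_one ((D*m - w)/δ)
    rw [← hhi] at h1
    rw [← hlo] at h2
    have h3 : (D*m + w)/δ - (D*m - w)/δ = 2 * (w/δ) := by ring
    have h4 : 1 ≤ w/δ := by rw [one_le_div hδ]; exact hδ2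
    linarith
  have hexj : ∃ j ∈ Finset.Icc lo hi, (3/4) * (Q:ℝ)^D / (4 * (w/δ)) ≤ (G.filter (fun x => ⌊S x/δ⌋ = j)).card := by
    by_contra hcon
    push Not at hcon
    have hsum := Finset.card_eq_sum_card_fiberwise (f := fun x => ⌊S x/δ⌋) (s := G) (t := Finset.Icc lo hi) hmaps
    have hsum' : (G.card:ℝ) = ∑ j ∈ Finset.Icc lo hi, ((G.filter (fun x => ⌊S x/δ⌋ = j)).card : ℝ) := by
      rw [hsum]; push_cast; rfl
    have hne : (Finset.Icc lo hi).Nonempty := by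
      have hle : lo ≤ hi := by
        apply Int.floor_le_floor; gcongr; linarith
      exact Finset.nonempty_Icc.2 hle
    have hlt := Finset.sum_lt_sum_of_nonempty hne hcon
    rw [← hsum', Finset.sum_const, nsmul_eq_mul] at hlt
    have : ((Finset.Icc lo hi).card : ℝ) * ((3/4) * (Q:ℝ)^D / (4 * (w/δ))) ≤ (4 * (w / δ)) * ((3/4) * (Q:ℝ)^D / (4 * (w/δ))) := by
      gcongr
    rw [mul_div_cancel₀ _ (by positivity)] at this
    linarith
  obtain ⟨j, _, hj⟩ := hexj
  refine ⟨_, ?_, le_trans (le_of_eq ?_) hj⟩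
  · intro u hu v hv
    simp only [Finset.mem_filter] at hu hv
    have := Int.abs_sub_lt_one_of_floor_eq_floor (hu.2.trans hv.2.symm)
    rw [← sub_div, abs_div, abs_of_pos hδ, div_lt_one hδ] at this
    exact this
  · rw [hw]; field_simp; norm_num

theorem ap_free_of_annulus (M D : ℕ) [Fact M.Prime] (U T : Finset (Fin D → ZMod M))
    (hUT : ∀ u ∈ U, ∀ t, u - t ∈ U → u + t ∈ U → t ∈ T)
    (hT : 2 * M * T.card ≤ M^D) :
    ∃ A : Finset (ZMod M), (∀ n d, n ∈ A → n - d ∈ A → n + d ∈ A → d = 0) ∧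
      M * U.card ≤ 2 * M^D * A.card := by
  classical
  have hMpos : 0 < M := (Fact.out : M.Prime).pos
  let V := Fin D → ZMod M
  have hV : Fintype.card V = M^D := by simp [V, ZMod.card]
  let A0 : V × V → Finset (ZMod M) := fun p => Finset.univ.filter (fun n => n • p.1 + p.2 ∈ U)
  let Bad : V × V → Finset (ZMod M × ZMod M) := fun p => Finset.univ.filter (fun e =>
    e.2 ≠ 0 ∧ e.1 • p.1 + p.2 ∈ U ∧ (e.1 - e.2) • p.1 + p.2 ∈ U ∧ (e.1 + e.2) • p.1 + p.2 ∈ U)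
  have hA0 : ∑ p : V × V, (A0 p).card = M * (M^D * U.card) := by
    simp only [A0, Finset.card_filter]
    rw [Finset.sum_comm]
    have : ∀ n : ZMod M, ∑ p : V × V, (if n • p.1 + p.2 ∈ U then 1 else 0) = M^D * U.card := by
      intro n
      rw [Fintype.sum_prod_type]
      have h1 : ∀ θ : V, ∑ α : V, (if n • θ + α ∈ U then 1 else 0) = U.card := by
        intro θ
        refine (Equiv.sum_comp (Equiv.addLeft (n • θ)) (fun x : V => if x ∈ U then 1 else 0)).trans ?_
        simp [V]
      simp only [h1, Finset.sum_const, Finset.card_univ, hV, smul_eq_mul]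
    simp only [this, Finset.sum_const, Finset.card_univ, ZMod.card, smul_eq_mul]
  have hBad : ∑ p : V × V, (Bad p).card ≤ M * M * (U.card * T.card) := by
    simp only [Bad, Finset.card_filter]
    rw [Finset.sum_comm]
    have : ∀ e : ZMod M × ZMod M, ∑ p : V × V, (if (e.2 ≠ 0 ∧ e.1 • p.1 + p.2 ∈ U ∧ (e.1 - e.2) • p.1 + p.2 ∈ U ∧ (e.1 + e.2) • p.1 + p.2 ∈ U) then 1 else 0) ≤ U.card * T.card := by
      rintro ⟨n, d⟩
      by_cases hd : d = 0
      · simp [hd]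
      rw [← Finset.card_filter, ← Finset.card_product]
      apply Finset.card_le_card_of_injOn (fun p => (n • p.1 + p.2, d • p.1))
      · rintro ⟨θ, α⟩ hp
        simp only [Finset.coe_filter, Finset.mem_univ, true_and, Set.mem_ofPred_eq] at hp
        simp only [Finset.coe_product, Set.mem_prod, Finset.mem_coe]
        refine ⟨hp.2.1, hUT _ hp.2.1 _ ?_ ?_⟩
        · convert hp.2.2.1 using 1
          rw [sub_smul]; abel
        · convert hp.2.2.2 using 1
          rw [add_smul]; abel
      · rintro ⟨θ, α⟩ _ ⟨θ', α'⟩ _ h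
        simp only [Prod.mk.injEq] at h
        have h1 : θ = θ' := smul_right_injective _ hd h.2
        subst h1
        simpa using h.1
    calc _ ≤ ∑ e : ZMod M × ZMod M, U.card * T.card := Finset.sum_le_sum (fun e _ => this e)
      _ = _ := by simp [ZMod.card]
  have hex : ∃ p : V × V, M * U.card + 2 * M^D * (Bad p).card ≤ 2 * M^D * (A0 p).card := by
    by_contra hcon
    push Not at hcon
    have hlt := Finset.sum_lt_sum_of_nonempty (s := (Finset.univ : Finset (V × V))) ⟨(0,0), Finset.mem_univ _⟩ (fun p _ => hcon p)
    rw [Finset.sum_add_distrib, ← Finset.mul_sum, ← Finset.mul_sum, hA0] at hlt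
    simp only [Finset.sum_const, Finset.card_univ, Fintype.card_prod, hV, smul_eq_mul] at hlt
    have h1 : 2 * M^D * ∑ p : V × V, (Bad p).card ≤ M^D * (M * U.card) * M^D := by
      calc _ ≤ 2 * M^D * (M * M * (U.card * T.card)) := by gcongr
        _ = M^D * (M * U.card) * (2 * M * T.card) := by ring
        _ ≤ _ := by gcongr
    rw [Finset.mul_sum] at h1
    nlinarith
  obtain ⟨p, hp⟩ := hex
  refine ⟨A0 p \ (Bad p).image Prod.fst, ?_, ?_⟩
  · intro n d h1 h2 h3
    by_contra hd
    simp only [Finset.mem_sdiff] at h1 h2 h3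
    apply h1.2
    rw [Finset.mem_image]
    refine ⟨(n,d), ?_, rfl⟩
    have a1 := h1.1
    have a2 := h2.1
    have a3 := h3.1
    simp only [A0, Finset.mem_filter, Finset.mem_univ, true_and] at a1 a2 a3
    simp only [Bad, Finset.mem_filter, Finset.mem_univ, true_and]
    exact ⟨hd, a1, a2, a3⟩
  · have h1 : (A0 p).card ≤ (A0 p \ (Bad p).image Prod.fst).card + (Bad p).card := by
      have := Finset.le_card_sdiff ((Bad p).image Prod.fst) (A0 p)
      have := Finset.card_image_le (s := Bad p) (f := Prod.fst)
      omega
    have h2 : 2 * M^D * (A0 p).card ≤ 2 * M^D * ((A0 p \ (Bad p).image Prod.fst).card + (Bad p).card) := by gcongr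
    rw [mul_add] at h2
    linarith

theorem elkin_type (M D : ℕ) [Fact M.Prime] (hM2 : M ≠ 2) (hD : 1 ≤ D) (ρ : ℝ) (hρ : 0 < ρ)
    (hρM : ρ^D = M) (h30 : 30 ≤ ρ^(D-1)) (h450 : √(D:ℝ) ≤ 450 * ρ^2) :
    ∃ A : Finset (ZMod M), (∀ n d, n ∈ A → n - d ∈ A → n + d ∈ A → d = 0) ∧
      √(D:ℝ) / (19200 * 2^D * ρ^2) * M ≤ A.card := by
  classical
  have hp : M.Prime := Fact.out
  have hodd : Odd M := hp.odd_of_ne_two hM2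
  obtain ⟨h, hh⟩ := hodd
  obtain ⟨Q, hQ⟩ : ∃ Q, 2 * Q = M + 1 := ⟨h+1, by omega⟩
  have hQ1 : 1 ≤ Q := by omega
  have hQM : Q ≤ M := by omega
  have hMpos : (0:ℝ) < M := by exact_mod_cast hp.pos
  have hQ1' : (1:ℝ) ≤ Q := by exact_mod_cast hQ1
  have hQM' : (Q:ℝ) ≤ M := by exact_mod_cast hQM
  have hMQ' : (M:ℝ) ≤ 2 * Q := by
    have : M ≤ 2 * Q := by omega
    exact_mod_cast this
  set P : ℝ := ρ^(D-1) with hP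
  have hPpos : 0 < P := by positivity
  have hMP : (M:ℝ) = ρ * P := by
    rw [← hρM, hP, ← pow_succ']; congr 1; omega
  have hD' : (1:ℝ) ≤ √D := by rw [Real.one_le_sqrt]; exact_mod_cast hD
  have hDs : √(D:ℝ)^2 = D := Real.sq_sqrt (Nat.cast_nonneg D)
  have hDpos : (0:ℝ) < D := by exact_mod_cast hD
  set a : ℝ := P / 30 with ha
  have ha1 : 1 ≤ a := by rw [ha, le_div_iff₀ (by norm_num)]; linarith
  have hδ2 : (D:ℝ) * a^2 ≤ 2 * Q^2 * √D := by
    have h1 : (M:ℝ)^2 ≤ (2*Q)^2 := by gcongr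
    have h2 : (D:ℝ) * a^2 = √D * (√D * P^2 / 900) := by rw [← mul_div_assoc, ← mul_assoc, ← sq, hDs, ha]; ring
    have h3 : √D * P^2 ≤ 450 * ρ^2 * P^2 := by gcongr
    have h4 : √D * P^2 / 900 ≤ 2 * Q^2 := by
      have : (M:ℝ)^2 = ρ^2 * P^2 := by rw [hMP]; ring
      nlinarith
    rw [h2, mul_comm (2 * (Q:ℝ)^2)]
    gcongr
  obtain ⟨U0, hU0, hU0c⟩ := cheb D Q hD hQ1 (D * a^2) (by positivity) hδ2
  let cu : (Fin D → Fin Q) → (Fin D → ZMod M) := fun u i => ((u i : ℕ) : ZMod M)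
  have hcu : Function.Injective cu := by
    intro u v huv
    funext i
    have := congrFun huv i
    simp only [cu] at this
    rw [ZMod.natCast_eq_natCast_iff', Nat.mod_eq_of_lt ((u i).2.trans_le hQM), Nat.mod_eq_of_lt ((v i).2.trans_le hQM)] at this
    exact Fin.ext this
  let ct : (Fin D → ℤ) → (Fin D → ZMod M) := fun u i => ((u i : ℤ) : ZMod M)
  let T0 := (Fintype.piFinset fun _ : Fin D => Finset.Icc (-(M:ℤ)) M).filter
      (fun t => ∑ i, ((t i:ℤ):ℝ)^2 ≤ D*a^2)
  have hT0 : (T0.card:ℝ) ≤ (15*a)^D := ball_count D M a ha1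
  have hTc : 2 * M * (T0.image ct).card ≤ M^D := by
    have h1 : ((T0.image ct).card : ℝ) ≤ (15*a)^D := le_trans (by exact_mod_cast Finset.card_image_le) hT0
    have h2 : (2:ℝ) ≤ 2^D := by
      calc (2:ℝ) = 2^1 := by norm_num
        _ ≤ 2^D := pow_le_pow_right₀ (by norm_num) hD
    have h3 : 2 * (15*a)^D ≤ P^D := by
      calc 2 * (15*a)^D ≤ 2^D * (15*a)^D := by gcongr
        _ = P^D := by rw [← mul_pow, ha]; ring
    have h4 : (2:ℝ) * M * (T0.image ct).card ≤ M^D := by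
      calc (2:ℝ) * M * (T0.image ct).card ≤ 2 * M * (15*a)^D := by gcongr
        _ = M * (2 * (15*a)^D) := by ring
        _ ≤ M * P^D := by gcongr
        _ = M^D := by
          nth_rewrite 1 [← hρM]
          rw [hMP, ← mul_pow]
    exact_mod_cast h4
  obtain ⟨A, hA, hAc⟩ := ap_free_of_annulus M D (U0.image cu) (T0.image ct) (by
    intro u hu t hm hpl
    simp only [Finset.mem_image] at hu hm hpl
    obtain ⟨u, hu, rfl⟩ := hu
    obtain ⟨p, hpU, hp⟩ := hm
    obtain ⟨r, hrU, hr⟩ := hpl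
    have key : ∀ i, ((p i : ℕ):ℤ) + ((r i : ℕ):ℤ) = 2 * ((u i : ℕ):ℤ) := by
      intro i
      have e1 := congrFun hp i
      have e2 := congrFun hr i
      simp only [cu, Pi.sub_apply, Pi.add_apply] at e1 e2
      have e3 : ((((p i : ℕ):ℤ) + ((r i : ℕ):ℤ) - 2 * ((u i : ℕ):ℤ) : ℤ) : ZMod M) = 0 := by
        push_cast
        rw [e1, e2]; ring
      rw [ZMod.intCast_zmod_eq_zero_iff_dvd] at e3
      have l1 := (p i).2
      have l2 := (r i).2
      have l3 := (u i).2
      have := Int.eq_zero_of_abs_lt_dvd e3 (by rw [abs_lt]; constructor <;> omega)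
      omega
    rw [Finset.mem_image]
    refine ⟨fun i => ((r i : ℕ):ℤ) - ((u i : ℕ):ℤ), ?_, ?_⟩
    · simp only [T0, Finset.mem_filter, Fintype.mem_piFinset, Finset.mem_Icc]
      constructor
      · intro i
        have l2 := (r i).2
        have l3 := (u i).2
        omega
      · have c1 := (abs_lt.1 (hU0 p hpU u hu)).2
        have c2 := (abs_lt.1 (hU0 r hrU u hu)).2
        have c3 : ∑ i, ((((r i : ℕ):ℤ) - ((u i : ℕ):ℤ) : ℤ):ℝ)^2 * 2 =
            ∑ i, ((p i : ℕ):ℝ)^2 + ∑ i, ((r i : ℕ):ℝ)^2 - 2 * ∑ i, ((u i : ℕ):ℝ)^2 := by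
          rw [Finset.mul_sum, ← Finset.sum_add_distrib, ← Finset.sum_sub_distrib]
          apply Finset.sum_congr rfl
          intro i _
          have k : ((p i : ℕ):ℝ) + ((r i : ℕ):ℝ) = 2 * ((u i : ℕ):ℝ) := by exact_mod_cast key i
          have k' : ((p i : ℕ):ℝ) = 2 * ((u i : ℕ):ℝ) - ((r i : ℕ):ℝ) := by linarith
          push_cast
          rw [k']; ring
        rw [← Finset.sum_mul] at c3
        linarith
    · funext i
      have e2 := congrFun hr i
      simp only [cu, Pi.add_apply] at e2
      simp only [ct]
      push_cast
      rw [e2]; ring) hTc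
  refine ⟨A, hA, ?_⟩
  rw [Finset.card_image_of_injective _ hcu] at hAc
  have hAc' : (M:ℝ) * U0.card ≤ 2 * M^D * A.card := by exact_mod_cast hAc
  have hUlow : (M:ℝ)^D / 2^D * (√D / (9600 * ρ^2)) ≤ U0.card := by
    refine le_trans ?_ hU0c
    have h1 : (M:ℝ)^D / 2^D ≤ Q^D := by
      rw [div_le_iff₀ (by positivity), ← mul_pow, mul_comm (Q:ℝ)]
      gcongr
    have h2 : √D / (9600 * ρ^2) ≤ (3/32) * (D*a^2) / (Q^2 * √D) := by
      have e : √D / (9600 * ρ^2) = (3/32) * (D*a^2) / (M^2 * √D) := by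
        rw [hMP, ha]
        nth_rewrite 2 [← hDs]
        field_simp
        norm_num
      rw [e]
      gcongr
    calc _ ≤ (Q:ℝ)^D * ((3/32) * (D*a^2) / (Q^2 * √D)) := by gcongr
      _ = _ := by ring
  have hfin : (M:ℝ) * ((M:ℝ)^D / 2^D * (√D / (9600 * ρ^2))) ≤ 2 * M^D * A.card := le_trans (by gcongr) hAc'
  have hMD : (0:ℝ) < 2 * M^D := by positivity
  have e : (M:ℝ) * ((M:ℝ)^D / 2^D * (√D / (9600 * ρ^2))) = 2 * M^D * (√(D:ℝ) / (19200 * 2^D * ρ^2) * M) := by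
    field_simp; norm_num
  rw [e] at hfin
  exact le_of_mul_le_mul_left hfin hMD

theorem wt_collision (M n : ℕ) [Fact M.Prime] (x y : Finset (Fin n)) (hxy : x ≠ y) :
    M * (Finset.univ.filter (fun w : Fin n → ZMod M => ∑ i ∈ x, w i = ∑ i ∈ y, w i)).card ≤ M^n := by
  classical
  -- an index in exactly one of the two sets
  have hex : ∃ i, (i ∈ x ∧ i ∉ y) ∨ (i ∈ y ∧ i ∉ x) := by
    by_contra hcon
    push Not at hcon
    exact hxy (Finset.ext fun i => ⟨fun h => by have := hcon i; tauto, fun h => by have := hcon i; tauto⟩)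
  obtain ⟨i, hi⟩ := hex
  have hs : ∀ (s : Finset (Fin n)) (w : Fin n → ZMod M) (t : ZMod M),
      ∑ j ∈ s, (w + Pi.single i t : Fin n → ZMod M) j = ∑ j ∈ s, w j + if i ∈ s then t else 0 := by
    intro s w t
    simp only [Pi.add_apply, Finset.sum_add_distrib, Pi.single_apply]
    simp
  have h1 : M * (Finset.univ.filter (fun w : Fin n → ZMod M => ∑ i ∈ x, w i = ∑ i ∈ y, w i)).card
      = ((Finset.univ : Finset (ZMod M)) ×ˢ (Finset.univ.filter (fun w : Fin n → ZMod M => ∑ i ∈ x, w i = ∑ i ∈ y, w i))).card := by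
    rw [Finset.card_product, Finset.card_univ, ZMod.card]
  have h2 : M^n = (Finset.univ : Finset (Fin n → ZMod M)).card := by
    simp [ZMod.card]
  rw [h1, h2]
  apply Finset.card_le_card_of_injOn (fun p => p.2 + Pi.single i p.1)
  · intro p _; simp
  · rintro ⟨t, w⟩ hw ⟨t', w'⟩ hw' heq
    simp only [Finset.coe_product, Finset.coe_univ, Set.mem_prod, Set.mem_univ, true_and, Finset.coe_filter,
      Finset.mem_univ, Set.mem_ofPred_eq] at hw hw'
    simp only at heq
    have ex : ∑ j ∈ x, w j + (if i ∈ x then t else 0) = ∑ j ∈ x, w' j + if i ∈ x then t' else 0 := by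
      rw [← hs, ← hs, heq]
    have ey : ∑ j ∈ y, w j + (if i ∈ y then t else 0) = ∑ j ∈ y, w' j + if i ∈ y then t' else 0 := by
      rw [← hs, ← hs, heq]
    have htt : t = t' := by
      rcases hi with ⟨a, b⟩ | ⟨a, b⟩
      · simp only [a, b, if_true, if_false, add_zero] at ex ey
        rw [hw, hw', ey] at ex
        exact add_left_cancel ex
      · simp only [a, b, if_true, if_false, add_zero] at ex ey
        rw [← hw, ← hw', ex] at ey
        exact add_left_cancel ey
    subst htt
    have := add_right_cancel heq
    rw [this]

/-- Pairs of disjoint `k`-subsets. -/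
def dpairs (n k : ℕ) : Finset (Finset (Fin n) × Finset (Fin n)) :=
  Finset.univ.filter (fun p => p.1.card = k ∧ p.2.card = k ∧ Disjoint p.1 p.2)

theorem mem_dpairs {n k : ℕ} {p : Finset (Fin n) × Finset (Fin n)} :
    p ∈ dpairs n k ↔ p.1.card = k ∧ p.2.card = k ∧ Disjoint p.1 p.2 := by
  simp [dpairs]

theorem card_dpairs (k : ℕ) : (dpairs (3*k) k).card = (3*k).choose k * (2*k).choose k := by
  classical
  have : dpairs (3*k) k = (Finset.powersetCard k (Finset.univ : Finset (Fin (3*k)))).biUnion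
      (fun x => (Finset.powersetCard k xᶜ).image (fun y => (x,y))) := by
    ext ⟨x, y⟩
    simp only [mem_dpairs, Finset.mem_biUnion, Finset.mem_powersetCard, Finset.subset_univ, true_and,
      Finset.mem_image, Prod.mk.injEq]
    constructor
    · rintro ⟨h1, h2, h3⟩
      exact ⟨x, h1, y, ⟨Finset.subset_compl_iff_disjoint_left.2 h3, h2⟩, rfl, rfl⟩
    · rintro ⟨x', h1, y', ⟨h2, h3⟩, rfl, rfl⟩
      exact ⟨h1, h3, Finset.subset_compl_iff_disjoint_left.1 h2⟩
  rw [this, Finset.card_biUnion]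
  · have : ∀ x ∈ Finset.powersetCard k (Finset.univ : Finset (Fin (3*k))),
        ((Finset.powersetCard k xᶜ).image (fun y => (x,y))).card = (2*k).choose k := by
      intro x hx
      rw [Finset.card_image_of_injective _ (fun a b h => (Prod.mk.inj h).2), Finset.card_powersetCard,
        Finset.card_compl, (Finset.mem_powersetCard.1 hx).2, Fintype.card_fin]
      congr 1; omega
    rw [Finset.sum_congr rfl this]
    simp
  · intro x _ x' _ hne
    rw [Function.onFun, Finset.disjoint_left]
    intro p hp hp'
    simp only [Finset.mem_image] at hp hp'
    obtain ⟨y, _, rfl⟩ := hp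
    obtain ⟨y', _, h⟩ := hp'
    exact hne (Prod.mk.inj h).1.symm

/-- Two different pairs sharing a component or the union. -/
def confl {n : ℕ} (p p' : Finset (Fin n) × Finset (Fin n)) : Prop :=
  p ≠ p' ∧ (p.1 = p'.1 ∨ p.2 = p'.2 ∨ p.1 ∪ p.2 = p'.1 ∪ p'.2)

open Classical in
theorem card_confl (k : ℕ) (p : Finset (Fin (3*k)) × Finset (Fin (3*k))) (hp : p ∈ dpairs (3*k) k) :
    ((dpairs (3*k) k).filter (fun p' => confl p p')).card ≤ 3 * (2*k).choose k := by
  obtain ⟨x, y⟩ := p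
  obtain ⟨h1, h2, h3⟩ := mem_dpairs.1 hp
  simp only at h1 h2 h3
  have hsub : (dpairs (3*k) k).filter (fun p' => confl (x,y) p') ⊆
      ((Finset.powersetCard k xᶜ).image (fun y' => (x,y'))) ∪
      (((Finset.powersetCard k yᶜ).image (fun x' => (x',y))) ∪
      ((Finset.powersetCard k (x ∪ y)).image (fun x' => (x', (x ∪ y) \ x')))) := by
    rintro ⟨x', y'⟩ h
    rw [Finset.mem_filter, mem_dpairs] at h
    obtain ⟨⟨g1, g2, g3⟩, _, g4⟩ := h
    simp only at g1 g2 g3 g4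
    simp only [Finset.mem_union, Finset.mem_image, Finset.mem_powersetCard, Prod.mk.injEq]
    rcases g4 with rfl | rfl | g4
    · left
      exact ⟨y', ⟨Finset.subset_compl_iff_disjoint_left.2 g3, g2⟩, rfl, rfl⟩
    · right; left
      exact ⟨x', ⟨Finset.subset_compl_iff_disjoint_left.2 g3.symm, g1⟩, rfl, rfl⟩
    · right; right
      refine ⟨x', ⟨by rw [g4]; exact Finset.subset_union_left, g1⟩, rfl, ?_⟩
      rw [g4]
      exact Finset.union_sdiff_cancel_left g3
  have c1 : (xᶜ).card = 2*k := by rw [Finset.card_compl, h1, Fintype.card_fin]; omega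
  have c2 : (yᶜ).card = 2*k := by rw [Finset.card_compl, h2, Fintype.card_fin]; omega
  have c3 : (x ∪ y).card = 2*k := by rw [Finset.card_union_of_disjoint h3]; omega
  refine (Finset.card_le_card hsub).trans ?_
  refine (Finset.card_union_le _ _).trans ?_
  have d1 := Finset.card_union_le ((Finset.powersetCard k yᶜ).image (fun x' => (x',y)))
      ((Finset.powersetCard k (x ∪ y)).image (fun x' => (x', (x ∪ y) \ x')))
  have d2 := Finset.card_image_le (s := Finset.powersetCard k xᶜ) (f := (fun y' => (x,y')))
  have d3 := Finset.card_image_le (s := Finset.powersetCard k yᶜ) (f := (fun x' => (x',y)))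
  have d4 := Finset.card_image_le (s := Finset.powersetCard k (x ∪ y)) (f := (fun x' => (x', (x ∪ y) \ x')))
  rw [Finset.card_powersetCard, c1] at d2
  rw [Finset.card_powersetCard, c2] at d3
  rw [Finset.card_powersetCard, c3] at d4
  omega

/-- Indicator vector. -/
def indv {n : ℕ} (x : Finset (Fin n)) : Fin n → ZMod 2 := fun i => if i ∈ x then 1 else 0

theorem indv_sum {n : ℕ} (k : ℕ) (x y z : Finset (Fin n)) (hx : x.card = k) (hy : y.card = k) (hz : z.card = 2*k) :
    indv x + indv y + indv z = 0 ↔ (Disjoint x y ∧ z = x ∪ y) := by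
  constructor
  · intro h
    have hpt : ∀ i, i ∈ z ↔ ((i ∈ x ∧ i ∉ y) ∨ (i ∈ y ∧ i ∉ x)) := by
      intro i
      have := congrFun h i
      simp only [indv, Pi.add_apply, Pi.zero_apply] at this
      by_cases a : i ∈ x <;> by_cases b : i ∈ y <;> by_cases c : i ∈ z <;> simp [a, b, c] at this ⊢ <;> revert this <;> decide
    have hsub : z ⊆ x ∪ y := by
      intro i hi; rw [Finset.mem_union]; have := (hpt i).1 hi; tauto
    have hc := Finset.card_union_add_card_inter x y
    have hle := Finset.card_le_card hsub
    have h0 : (x ∩ y).card = 0 := by omega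
    have hd : Disjoint x y := by
      rw [Finset.disjoint_iff_inter_eq_empty]; exact Finset.card_eq_zero.1 h0
    exact ⟨hd, Finset.eq_of_subset_of_card_le hsub (by omega)⟩
  · rintro ⟨hd, rfl⟩
    funext i
    have hd' : i ∈ x → i ∉ y := fun h => Finset.disjoint_left.1 hd h
    simp only [indv, Pi.add_apply, Pi.zero_apply, Finset.mem_union]
    by_cases a : i ∈ x <;> by_cases b : i ∈ y <;> simp [a, b] <;> first | (exact absurd b (hd' a)) | decide

theorem hash_step (k M : ℕ) [Fact M.Prime] (hM2 : M ≠ 2) (A : Finset (ZMod M))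
    (hA : ∀ n d, n ∈ A → n - d ∈ A → n + d ∈ A → d = 0) (hK : 6 * (2*k).choose k ≤ M) :
    ∃ (m : ℕ) (a b c : Fin m → (Fin (3*k) → ZMod 2)),
      (∀ i j l, a i + b j + c l = 0 ↔ (i = j ∧ j = l)) ∧
      (3*k).choose k * (2*k).choose k * A.card ≤ 2 * M^2 * m := by
  classical
  have hMpos : 0 < M := (Fact.out : M.Prime).pos
  have h2ne : (2 : ZMod M) ≠ 0 := by
    intro h
    have h' : ((2:ℕ) : ZMod M) = 0 := by exact_mod_cast h
    rw [ZMod.natCast_eq_zero_iff] at h'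
    exact hM2 ((Nat.prime_dvd_prime_iff_eq Fact.out Nat.prime_two).1 h')
  let n := 3*k
  let P := dpairs n k
  let K := (2*k).choose k
  let W := Fin n → ZMod M
  have hW : Fintype.card W = M^n := by simp [W, ZMod.card]
  let wt : W → Finset (Fin n) → ZMod M := fun w x => ∑ i ∈ x, w i
  let C := (P ×ˢ P).filter (fun q => confl q.1 q.2)
  have hC : C.card ≤ P.card * (3 * K) := by
    have : C.card = ∑ p ∈ P, (P.filter (fun p' => confl p p')).card := by
      simp only [C, Finset.card_filter, Finset.sum_product]
    rw [this]
    calc _ ≤ ∑ p ∈ P, 3 * K := Finset.sum_le_sum (fun p hp => card_confl k p hp)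
      _ = _ := by simp
  let Col : W → Finset _ := fun w => C.filter (fun q => wt w q.1.1 = wt w q.2.1 ∧ wt w q.1.2 = wt w q.2.2)
  have hCol : M * ∑ w : W, (Col w).card ≤ C.card * M^n := by
    simp only [Col, Finset.card_filter]
    rw [Finset.sum_comm, Finset.mul_sum]
    calc _ ≤ ∑ q ∈ C, M^n := by
          apply Finset.sum_le_sum
          rintro ⟨⟨x, y⟩, ⟨x', y'⟩⟩ hq
          have hne : (x, y) ≠ (x', y') := (Finset.mem_filter.1 hq).2.1
          rw [← Finset.card_filter]
          by_cases hx : x = x'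
          · have hy : y ≠ y' := fun h => hne (by rw [hx, h])
            refine le_trans ?_ (wt_collision M n y y' hy)
            gcongr with w
            exact fun h => h.2
          · refine le_trans ?_ (wt_collision M n x x' hx)
            gcongr with w
            exact fun h => h.1
      _ = _ := by simp
  have hexw : ∃ w : W, M * (Col w).card ≤ C.card := by
    by_contra hcon
    push Not at hcon
    have hlt := Finset.sum_lt_sum_of_nonempty (s := (Finset.univ : Finset W)) ⟨0, Finset.mem_univ _⟩ (fun p _ => hcon p)
    rw [← Finset.mul_sum] at hlt
    simp only [Finset.sum_const, Finset.card_univ, hW, smul_eq_mul] at hlt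
    nlinarith
  obtain ⟨w, hw⟩ := hexw
  have hB : 2 * (Col w).card ≤ P.card := by
    have h1 : M * (2 * (Col w).card) ≤ M * P.card := by
      calc M * (2 * (Col w).card) = 2 * (M * (Col w).card) := by ring
        _ ≤ 2 * (P.card * (3*K)) := Nat.mul_le_mul_left 2 (hw.trans hC)
        _ = (6 * K) * P.card := by ring
        _ ≤ M * P.card := by gcongr
    exact Nat.le_of_mul_le_mul_left h1 hMpos
  let Z := ZMod M
  let G : Z × Z → Finset (Finset (Fin n) × Finset (Fin n)) := fun s =>
    P.filter (fun p => s.1 + wt w p.1 = s.2 + wt w p.2 ∧ s.1 + wt w p.1 ∈ A)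
  let Bd : Z × Z → Finset _ := fun s => (Col w).filter (fun q => q.1 ∈ G s)
  have hcount : ∀ p : Finset (Fin n) × Finset (Fin n),
      (Finset.univ.filter (fun s : Z × Z => s.1 + wt w p.1 = s.2 + wt w p.2 ∧ s.1 + wt w p.1 ∈ A)).card = A.card := by
    intro p
    symm
    apply Finset.card_bij (fun a _ => (a - wt w p.1, a - wt w p.2))
    · intro a ha; simp [ha]
    · intro a _ b _ h; simpa using h
    · rintro ⟨s, t⟩ h
      simp only [Finset.mem_filter, Finset.mem_univ, true_and] at h
      refine ⟨s + wt w p.1, h.2, ?_⟩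
      rw [Prod.mk.injEq]
      exact ⟨by ring, by rw [h.1]; ring⟩
  have hG : ∑ s : Z × Z, (G s).card = P.card * A.card := by
    simp only [G, Finset.card_filter]
    rw [Finset.sum_comm]
    calc _ = ∑ p ∈ P, A.card := by
          apply Finset.sum_congr rfl
          intro p _
          rw [← Finset.card_filter, hcount p]
      _ = _ := by simp
  have hBd : ∑ s : Z × Z, (Bd s).card ≤ (Col w).card * A.card := by
    simp only [Bd, Finset.card_filter]
    rw [Finset.sum_comm]
    calc _ ≤ ∑ q ∈ Col w, A.card := by
          apply Finset.sum_le_sum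
          intro q _
          rw [← Finset.card_filter, ← hcount q.1]
          apply Finset.card_le_card
          intro s hs
          simp only [Finset.mem_filter, Finset.mem_univ, true_and, G] at hs ⊢
          exact hs.2
      _ = _ := by simp
  have hexs : ∃ s : Z × Z, P.card * A.card + 2 * M^2 * (Bd s).card ≤ 2 * M^2 * (G s).card := by
    by_contra hcon
    push Not at hcon
    have hlt := Finset.sum_lt_sum_of_nonempty (s := (Finset.univ : Finset (Z × Z))) ⟨0, Finset.mem_univ _⟩ (fun p _ => hcon p)
    have hZ : Fintype.card (Z × Z) = M^2 := by rw [Fintype.card_prod]; simp only [Z, ZMod.card]; ring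
    rw [Finset.sum_add_distrib, ← Finset.mul_sum, ← Finset.mul_sum, hG] at hlt
    simp only [Finset.sum_const, Finset.card_univ, hZ, smul_eq_mul] at hlt
    have h1 : 2 * M^2 * ∑ s : Z × Z, (Bd s).card ≤ M^2 * (P.card * A.card) := by
      calc _ ≤ 2 * M^2 * ((Col w).card * A.card) := by gcongr
        _ = M^2 * ((2 * (Col w).card) * A.card) := by ring
        _ ≤ _ := by gcongr
    rw [Finset.mul_sum] at h1
    linarith
  obtain ⟨⟨α, β⟩, hs⟩ := hexs
  set G0 := G (α, β) with hG0
  set B0 := Bd (α, β) with hB0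
  -- conflicting pairs in G0 are in B0
  have hconf : ∀ p ∈ G0, ∀ p' ∈ G0, confl p p' → (p, p') ∈ B0 := by
    intro p hp p' hp' hc
    have m1 := Finset.mem_filter.1 hp
    have m2 := Finset.mem_filter.1 hp'
    obtain ⟨a1, a2, a3⟩ := m1
    obtain ⟨b1, b2, b3⟩ := m2
    simp only at a2 b2
    refine Finset.mem_filter.2 ⟨Finset.mem_filter.2 ⟨Finset.mem_filter.2 ⟨Finset.mem_product.2 ⟨a1, b1⟩, hc⟩, ?_⟩, hp⟩
    simp only
    rcases hc.2 with h | h | h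
    · refine ⟨by rw [h], ?_⟩
      rw [h] at a2
      exact add_left_cancel (a2.symm.trans b2)
    · refine ⟨?_, by rw [h]⟩
      rw [h] at a2
      exact add_left_cancel (a2.trans b2.symm)
    · have hu : wt w p.1 + wt w p.2 = wt w p'.1 + wt w p'.2 := by
        simp only [wt]
        rw [← Finset.sum_union (mem_dpairs.1 a1).2.2, ← Finset.sum_union (mem_dpairs.1 b1).2.2, h]
      have e1 : 2 * (wt w p.1 - wt w p'.1) = 0 := by linear_combination hu + a2 - b2
      have e2 : wt w p.1 = wt w p'.1 := by
        rcases mul_eq_zero.1 e1 with h | h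
        · exact absurd h h2ne
        · exact sub_eq_zero.1 h
      exact ⟨e2, by rw [e2] at hu; exact add_left_cancel hu⟩
  let G1 := G0 \ B0.image Prod.fst
  have hG1 : ∀ p ∈ G1, ∀ p' ∈ G0, ¬ confl p p' := by
    intro p hp p' hp' hc
    rw [Finset.mem_sdiff] at hp
    exact hp.2 (Finset.mem_image.2 ⟨_, hconf p hp.1 p' hp' hc, rfl⟩)
  have hG1sub : ∀ p ∈ G1, p ∈ G0 := fun p hp => (Finset.mem_sdiff.1 hp).1
  let e := G1.equivFin.symm
  refine ⟨G1.card, fun i => indv (e i).1.1, fun i => indv (e i).1.2, fun i => indv ((e i).1.1 ∪ (e i).1.2), ?_, ?_⟩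
  · intro i j l
    have hi := hG1sub _ (e i).2
    have hj := hG1sub _ (e j).2
    have hl := hG1sub _ (e l).2
    obtain ⟨pi, ei, ai⟩ := Finset.mem_filter.1 hi
    obtain ⟨pj, ej, aj⟩ := Finset.mem_filter.1 hj
    obtain ⟨pl, el, al⟩ := Finset.mem_filter.1 hl
    simp only at ei ai ej aj el al
    obtain ⟨i1, i2, i3⟩ := mem_dpairs.1 pi
    obtain ⟨j1, j2, j3⟩ := mem_dpairs.1 pj
    obtain ⟨l1, l2, l3⟩ := mem_dpairs.1 pl
    rw [indv_sum k _ _ _ i1 j2 (by rw [Finset.card_union_of_disjoint l3]; omega)]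
    constructor
    · rintro ⟨hd, hu⟩
      have hsum : wt w (e l).1.1 + wt w (e l).1.2 = wt w (e i).1.1 + wt w (e j).1.2 := by
        simp only [wt]
        rw [← Finset.sum_union l3, ← Finset.sum_union hd, hu]
      -- three-term progression with centre from l
      have hd0 : (α + wt w (e i).1.1) - (α + wt w (e l).1.1) = 0 := by
        apply hA (α + wt w (e l).1.1) _ al
        · rw [ej] at aj
          convert aj using 1
          linear_combination hsum + el
        · convert ai using 1
          ring
      have e1 : wt w (e i).1.1 = wt w (e l).1.1 := by linear_combination hd0
      have e2 : wt w (e j).1.2 = wt w (e l).1.2 := by linear_combination -hsum - hd0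
      have hq : ((e i).1.1, (e j).1.2) ∈ G0 := by
        refine Finset.mem_filter.2 ⟨mem_dpairs.2 ⟨i1, j2, hd⟩, ?_, ai⟩
        simp only
        rw [e1, e2]; exact el
      have f1 := hG1 _ (e i).2 _ hq
      have f2 := hG1 _ (e j).2 _ hq
      have f3 := hG1 _ (e l).2 _ hq
      have g1 : (e i).1 = ((e i).1.1, (e j).1.2) := by
        by_contra h; exact f1 ⟨h, Or.inl rfl⟩
      have g2 : (e j).1 = ((e i).1.1, (e j).1.2) := by
        by_contra h; exact f2 ⟨h, Or.inr (Or.inl rfl)⟩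
      have g3 : (e l).1 = ((e i).1.1, (e j).1.2) := by
        by_contra h; exact f3 ⟨h, Or.inr (Or.inr hu)⟩
      exact ⟨e.injective (Subtype.ext (g1.trans g2.symm)), e.injective (Subtype.ext (g2.trans g3.symm))⟩
    · rintro ⟨rfl, rfl⟩
      exact ⟨i3, rfl⟩
  · have h1 : G0.card ≤ G1.card + B0.card := by
      have := Finset.le_card_sdiff (B0.image Prod.fst) G0
      have := Finset.card_image_le (s := B0) (f := Prod.fst)
      simp only [G1]
      omega
    have h2 : 2 * M^2 * G0.card ≤ 2 * M^2 * (G1.card + B0.card) := by gcongr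
    rw [mul_add] at h2
    rw [← card_dpairs]
    have h3 : P.card * A.card + 2 * M^2 * B0.card ≤ 2 * M^2 * G0.card := hs
    show P.card * A.card ≤ _
    linarith

set_option maxHeartbeats 1600000 in
theorem stmt_aux (k : ℕ) (hk : 10^36 ≤ k) :
    ∃ (m : ℕ) (a b c : Fin m → (Fin (3*k) → ZMod 2)),
      (∀ i j l, a i + b j + c l = 0 ↔ (i = j ∧ j = l)) ∧
      ((3*k).choose k : ℝ) * (2:ℝ) ^ (-(4 * √(k:ℝ))) < m := by
  have hkR : (10:ℝ)^36 ≤ k := by exact_mod_cast hk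
  have hk0 : k ≠ 0 := by
    rintro rfl; norm_num at hk
  set K := (2*k).choose k with hKdef
  have hKpos : 0 < K := Nat.choose_pos (by omega)
  obtain ⟨M, hMp, hM1, hM2⟩ := Nat.exists_prime_lt_and_le_two_mul (6*K) (by omega)
  have : Fact M.Prime := ⟨hMp⟩
  have hMne : M ≠ 2 := by omega
  have hMlow : 2^k ≤ M := by
    have h1 := Nat.four_pow_le_two_mul_self_mul_centralBinom k (by omega)
    rw [Nat.centralBinom_eq_two_mul_choose, ← hKdef] at h1
    have h2 : k < 2^k := Nat.lt_two_pow_self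
    have h3 : (4:ℕ)^k = 2^k * 2^k := by rw [← mul_pow]; norm_num
    have h4 : 2^k * 2^k ≤ 2^k * (2 * K) := by
      calc 2^k * 2^k ≤ 2 * k * K := by rw [← h3]; exact h1
        _ ≤ 2 * 2^k * K := by gcongr
        _ = _ := by ring
    have h5 := Nat.le_of_mul_le_mul_left h4 (by positivity)
    omega
  have hMup : M ≤ 2^(2*k+4) := by
    have h1 : K ≤ 2^(2*k) := Nat.choose_le_two_pow (2*k) k
    calc M ≤ 2 * (6 * K) := hM2
      _ ≤ 2 * (6 * 2^(2*k)) := by gcongr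
      _ ≤ 2^(2*k+4) := by rw [pow_add]; omega
  set s := √(k:ℝ) with hs
  have hs2 : s^2 = k := Real.sq_sqrt (Nat.cast_nonneg k)
  have hs18 : (10:ℝ)^18 ≤ s := by
    rw [hs]; apply Real.le_sqrt_of_sq_le
    have : ((10:ℝ)^18)^2 = 10^36 := by norm_num
    linarith
  set D := ⌈2*s⌉₊ with hD
  have hD1 : 2 * s ≤ D := Nat.le_ceil _
  have hD2 : (D:ℝ) < 2*s + 1 := Nat.ceil_lt_add_one (by linarith)
  have hDbig : (10:ℝ)^18 ≤ D := by linarith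
  have hDpos : (0:ℝ) < D := by linarith
  have hDn : 2 ≤ D := by
    have : (2:ℝ) ≤ D := by linarith
    exact_mod_cast this
  have hMpos : (0:ℝ) < M := by exact_mod_cast hMp.pos
  set ρ : ℝ := (M:ℝ)^((1:ℝ)/D) with hρ
  have hρpos : 0 < ρ := Real.rpow_pos_of_pos hMpos _
  have hρM : ρ^D = M := by
    rw [hρ, ← Real.rpow_natCast, ← Real.rpow_mul hMpos.le, one_div_mul_cancel hDpos.ne', Real.rpow_one]
  have hρup : ρ^2 ≤ (2:ℝ)^((4*(k:ℝ)+8)/D) := by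
    have h1 : (M:ℝ) ≤ (2:ℝ)^((2*k+4 : ℕ):ℝ) := by rw [Real.rpow_natCast]; exact_mod_cast hMup
    have h2 : ρ ≤ ((2:ℝ)^((2*k+4 : ℕ):ℝ))^((1:ℝ)/D) := by
      rw [hρ]; exact Real.rpow_le_rpow hMpos.le h1 (by positivity)
    calc ρ^2 ≤ (((2:ℝ)^((2*k+4 : ℕ):ℝ))^((1:ℝ)/D))^2 := by gcongr
      _ = _ := by
        rw [← Real.rpow_mul (by norm_num), ← Real.rpow_natCast, ← Real.rpow_mul (by norm_num)]
        congr 1; push_cast; ring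
  have hρlow : (D:ℝ)/18 ≤ ρ := by
    have h1 : (2:ℝ)^(k:ℝ) ≤ M := by rw [Real.rpow_natCast]; exact_mod_cast hMlow
    have h2 : ((2:ℝ)^(k:ℝ))^((1:ℝ)/D) ≤ ρ := by
      rw [hρ]; exact Real.rpow_le_rpow (by positivity) h1 (by positivity)
    have h3 : (D:ℝ)/9 ≤ k * (1/D) := by
      rw [mul_one_div, div_le_div_iff₀ (by norm_num) hDpos]
      nlinarith
    have h4 : (2:ℝ)^((D:ℝ)/9) ≤ ρ := by
      refine le_trans ?_ h2
      rw [← Real.rpow_mul (by norm_num)]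
      exact Real.rpow_le_rpow_of_exponent_le (by norm_num) h3
    refine le_trans ?_ h4
    rw [Real.rpow_def_of_pos (by norm_num)]
    have h5 := Real.add_one_le_exp (Real.log 2 * ((D:ℝ)/9))
    have h6 := Real.log_two_gt_d9
    nlinarith
  have hρ30 : 30 ≤ ρ := by linarith
  have h30 : 30 ≤ ρ^(D-1) := by
    calc (30:ℝ) ≤ ρ := hρ30
      _ = ρ^1 := by ring
      _ ≤ ρ^(D-1) := pow_le_pow_right₀ (by linarith) (by omega)
  have hsD : √(D:ℝ)^2 = D := Real.sq_sqrt hDpos.le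
  have hsD9 : (10:ℝ)^9 ≤ √(D:ℝ) := by
    apply Real.le_sqrt_of_sq_le
    have : ((10:ℝ)^9)^2 = 10^18 := by norm_num
    linarith
  have h450 : √(D:ℝ) ≤ 450 * ρ^2 := by
    have h1 : √(D:ℝ) ≤ D := by nlinarith
    nlinarith
  obtain ⟨A, hA, hAc⟩ := elkin_type M D hMne (by omega) ρ hρpos hρM h30 h450
  obtain ⟨m, a, b, c, habc, hm⟩ := hash_step k M hMne A hA (by omega)
  refine ⟨m, a, b, c, habc, ?_⟩
  rw [← hKdef] at hm
  set N := (3*k).choose k with hN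
  have hNpos : (0:ℝ) < N := by
    have : 0 < N := Nat.choose_pos (by omega)
    exact_mod_cast this
  have hm' : (N:ℝ) * K * A.card ≤ 2 * M^2 * m := by exact_mod_cast hm
  have hMK : (M:ℝ) ≤ 12 * K := by
    have : M ≤ 12 * K := by omega
    exact_mod_cast this
  -- exponent bound
  have hexp : (2:ℝ)^D * ρ^2 ≤ (2:ℝ)^(4*s) * 1024 := by
    calc (2:ℝ)^D * ρ^2 ≤ (2:ℝ)^(D:ℝ) * (2:ℝ)^((4*(k:ℝ)+8)/D) := by
          rw [Real.rpow_natCast]; gcongr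
      _ = (2:ℝ)^((D:ℝ) + (4*(k:ℝ)+8)/D) := by rw [Real.rpow_add (by norm_num)]
      _ ≤ (2:ℝ)^(4*s + 10) := by
          apply Real.rpow_le_rpow_of_exponent_le (by norm_num)
          have : (4*(k:ℝ)+8)/D ≤ 4*s + 10 - D := by
            rw [div_le_iff₀ hDpos]
            nlinarith
          linarith
      _ = _ := by
          rw [Real.rpow_add (by norm_num)]; norm_num
  have hE : 0 < (2:ℝ)^(4*s) := by positivity
  have hden : 0 < (2:ℝ)^D * ρ^2 := by positivity
  rw [Real.rpow_neg (by norm_num), ← div_eq_mul_inv, div_lt_iff₀ hE]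
  -- lower bound for m
  set q := √(D:ℝ) / (19200 * 2^D * ρ^2) with hq
  have hqpos : 0 < q := by positivity
  have h1 : (N:ℝ) * (M/12) * (q * M) ≤ 2 * M^2 * m := by
    refine le_trans ?_ hm'
    gcongr
    linarith
  have h2 : (N:ℝ) * q / 24 ≤ m := by
    have h3 : (2 * (M:ℝ)^2) * (N * q / 24) ≤ 2 * M^2 * m := by
      refine le_trans (le_of_eq ?_) h1
      ring
    exact le_of_mul_le_mul_left h3 (by positivity)
  have h4 : 24 < q * (2:ℝ)^(4*s) := by
    rw [hq, div_mul_eq_mul_div, lt_div_iff₀ (by positivity)]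
    nlinarith
  nlinarith

/-- For all sufficiently large `n` divisible by 3, there is a tri-colored
sum-free set in `𝔽₂ⁿ` of size greater than `C(n, n/3) * 2^{-√(16n/3)}`. -/
theorem stmt19 :
    ∃ N : ℕ, ∀ n ≥ N, 3 ∣ n →
      ∃ (m : ℕ) (a b c : Fin m → (Fin n → ZMod 2)),
        (∀ i j k, a i + b j + c k = 0 ↔ (i = j ∧ j = k)) ∧
        (m : ℝ) > (n.choose (n / 3) : ℝ) *
          Real.rpow 2 (-Real.sqrt (16 * n / 3)) := by
  refine ⟨3 * 10^36, ?_⟩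
  rintro n hn ⟨k, rfl⟩
  obtain ⟨m, a, b, c, h, hm⟩ := stmt_aux k (by omega)
  refine ⟨m, a, b, c, h, ?_⟩
  have e1 : 3 * k / 3 = k := by omega
  have e2 : √(16 * ((3 * k : ℕ):ℝ) / 3) = 4 * √(k:ℝ) := by
    rw [show (16 * ((3 * k : ℕ):ℝ) / 3) = 4^2 * (k:ℝ) by push_cast; ring,
      Real.sqrt_mul (by norm_num), Real.sqrt_sq (by norm_num)]
  rw [e1, e2]
  exact hm
end
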